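/- For all r, s ≥ 0, the real Clifford algebras satisfy the periodicity Cl_{r+8,s} ≅ Cl_{r,s+8} ≅ M₁₆(Cl_{r,s}). -/

import Mathlib

/-- The quadratic form on `ℝ^(r+s)` whose Clifford algebra (in Mathlib's convention
`ι v ^ 2 = Q v`) is `Cl_{r,s}`, i.e. `e_i² = -1` for `i < r` and `e_i² = +1` for `i ≥ r`. -/
noncomputable def QSig (r s : ℕ) : QuadraticForm ℝ (Fin (r + s) → ℝ) :=
  QuadraticMap.weightedSumSquares ℝ
    (fun i : Fin (r + s) => if i.val < r then (-1 : ℝ) else 1)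

/-!
An element `ω` of even degree of `Cl(P)` that anticommutes with the vectors and has unit square `c`
untwists the graded tensor product: inside `Cl(c • Q ⊕ P)`, the elements `c⁻¹ • v ω` satisfy the
relations of `Cl(Q)` and commute with `Cl(P)`, so `Cl(c • Q ⊕ P) ≅ Cl(Q) ⊗ Cl(P)`. The planes
`⟨-1, -1⟩`, `⟨1, 1⟩` and `⟨-1, 1⟩` all have such an `ω`, with `c = -1`, `-1` and `1` respectively.

Splitting off a definite plane of either sign thus reverses the sign of the remaining form, so that
both `Cl(Q ⊕ 4⟨-1⟩)` and `Cl(Q ⊕ 4⟨1⟩)` are `Cl(Q)` tensored with the Clifford algebras of the two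
definite planes. So `Cl(Q ⊕ 8⟨-1⟩)` and `Cl(Q ⊕ 8⟨1⟩)` are both `Cl(Q ⊕ 4⟨-1, 1⟩)`, and each of the
four planes `⟨-1, 1⟩` contributes a factor `Cl(⟨-1, 1⟩) ≅ M₂(R)`.
-/

open CliffordAlgebra
open scoped TensorProduct Quaternion

theorem commute_of_forall_commute_ι {R M A : Type*} [CommRing R] [AddCommGroup M] [Module R M]
    [Ring A] [Algebra R A] {Q : QuadraticForm R M} (f : CliffordAlgebra Q →ₐ[R] A) {a : A}
    (h : ∀ v, Commute (f (ι Q v)) a) (x : CliffordAlgebra Q) : Commute (f x) a := by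
  induction x using CliffordAlgebra.induction with
  | algebraMap r => simpa only [AlgHom.commutes] using Algebra.commute_algebraMap_left r a
  | ι v => exact h v
  | mul x y hx hy => simpa only [map_mul] using hx.mul_left hy
  | add x y hx hy => simpa only [map_add] using hx.add_left hy

section VolumeElement

variable {R M N : Type*} [CommRing R] [AddCommGroup M] [AddCommGroup N] [Module R M] [Module R N]

/-- The algebraic properties, for an even-dimensional quadratic space with form `P`, of the product
`ω` of the vectors of an orthogonal basis: it is even, anticommutes with the vectors and has the
scalar square `c`. -/
structure IsVolumeElement (P : QuadraticForm R N) (ω : CliffordAlgebra P) (c : R) : Prop where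
  mem_evenOdd_zero : ω ∈ evenOdd P 0
  mul_ι (x : N) : ω * ι P x = -(ι P x * ω)
  mul_self : ω * ω = algebraMap R _ c

namespace IsVolumeElement

section

variable {Q : QuadraticForm R M} {P : QuadraticForm R N} {ω : CliffordAlgebra P} {c : R}

theorem commute_map_inr_ι (hω : IsVolumeElement P ω c) (v : M) :
    Commute (map (.inr Q P) ω) (ι (Q.prod P) (v, 0)) := by
  have h := commute_map_mul_map_of_isOrtho_of_mem_evenOdd_zero_left (.inr Q P) (.inl Q P)
    (fun _ _ => QuadraticMap.IsOrtho.inr_inl _ _) ω (ι Q v) hω.mem_evenOdd_zero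
    (ι_mem_evenOdd_one Q v)
  simpa only [map_apply_ι, QuadraticMap.Isometry.inl_apply] using h

theorem map_inr_mul_ι (hω : IsVolumeElement P ω c) (x : N) :
    map (.inr Q P) ω * ι (Q.prod P) (0, x) = -(ι (Q.prod P) (0, x) * map (.inr Q P) ω) := by
  simpa using congrArg (map (.inr Q P)) (hω.mul_ι x)

theorem map_inr_mul_self (hω : IsVolumeElement P ω c) :
    map (.inr Q P) ω * map (.inr Q P) ω = algebraMap R _ c := by
  rw [← map_mul, hω.mul_self, AlgHom.commutes]

end

variable {Q Q' : QuadraticForm R M} {P P' : QuadraticForm R N} {ω : CliffordAlgebra P}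
  {ω' : CliffordAlgebra P'} {c : Rˣ} (hω : IsVolumeElement P ω c) (hQ : ∀ v, Q' v = c * Q v)

/-- The homomorphism `Cl(c • Q ⊕ P) → Cl(Q) ⊗ Cl(P)` sending `(v, x)` to `v ⊗ ω + 1 ⊗ x`. Here and
below `c • Q` is any form `Q'` with the same values, so that the case `c • Q = -Q` and the like
need no transport along equalities of forms. -/
noncomputable def toTensor :
    CliffordAlgebra (Q'.prod P) →ₐ[R] CliffordAlgebra Q ⊗[R] CliffordAlgebra P :=
  lift _ ⟨((TensorProduct.mk R _ _).flip ω ∘ₗ ι Q).coprod (TensorProduct.mk R _ _ 1 ∘ₗ ι P), by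
    rintro ⟨v, x⟩
    simp only [LinearMap.coprod_apply, LinearMap.comp_apply, LinearMap.flip_apply,
      TensorProduct.mk_apply, add_mul, mul_add, Algebra.TensorProduct.tmul_mul_tmul, one_mul,
      mul_one, ι_sq_scalar, hω.mul_self, hω.mul_ι, QuadraticMap.prod_apply, hQ, map_add, map_mul,
      TensorProduct.tmul_neg]
    simp [Algebra.algebraMap_eq_smul_one, ← TensorProduct.smul_tmul', TensorProduct.tmul_smul,
      Algebra.TensorProduct.one_def, smul_smul, mul_comm]⟩

@[simp]
theorem toTensor_ι (p : M × N) : hω.toTensor hQ (ι _ p) = ι Q p.1 ⊗ₜ ω + 1 ⊗ₜ ι P p.2 :=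
  lift_ι_apply ..

theorem toTensor_map_inr (y : CliffordAlgebra P) :
    hω.toTensor hQ (map (.inr Q' P) y) = 1 ⊗ₜ y := by
  have h : (hω.toTensor hQ).comp (map (.inr Q' P)) = Algebra.TensorProduct.includeRight := by
    ext x
    simp
  exact DFunLike.congr_fun h y

/-- The homomorphism `Cl(Q) → Cl(c • Q ⊕ P)` sending `v` to `c⁻¹ • v ω`; its image commutes with
`Cl(P)`. -/
noncomputable def twistedInl : CliffordAlgebra Q →ₐ[R] CliffordAlgebra (Q'.prod P) :=
  lift _ ⟨(↑c⁻¹ : R) • LinearMap.mulRight R (map (.inr Q' P) ω) ∘ₗ ι _ ∘ₗ LinearMap.inl R M N, by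
    intro v
    have hv : ι (Q'.prod P) (v, 0) * ι (Q'.prod P) (v, 0) = algebraMap R _ (c * Q v) := by
      simp [ι_sq_scalar, hQ]
    simp only [LinearMap.smul_apply, LinearMap.comp_apply, LinearMap.inl_apply,
      LinearMap.mulRight_apply, smul_mul_smul_comm]
    rw [(hω.commute_map_inr_ι v).mul_mul_mul_comm, hv, hω.map_inr_mul_self, ← map_mul,
      Algebra.smul_def, ← map_mul]
    congr 1
    linear_combination (Q v * (c * ↑c⁻¹ + 1)) * c.mul_inv⟩

@[simp]
theorem twistedInl_ι (v : M) :
    hω.twistedInl hQ (ι Q v) = (↑c⁻¹ : R) • (ι _ (v, 0) * map (.inr Q' P) ω) :=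
  lift_ι_apply ..

theorem commute_twistedInl_map_inr (x : CliffordAlgebra Q) (y : CliffordAlgebra P) :
    Commute (hω.twistedInl hQ x) (map (.inr Q' P) y) := by
  refine commute_of_forall_commute_ι _ (fun v => ?_) x
  refine (commute_of_forall_commute_ι _ (fun w => ?_) y).symm
  have hwv : ι (Q'.prod P) (0, w) * ι _ (v, 0) = -(ι _ (v, 0) * ι _ (0, w)) :=
    ι_mul_ι_comm_of_isOrtho (QuadraticMap.IsOrtho.inr_inl _ _)
  rw [twistedInl_ι, map_apply_ι, QuadraticMap.Isometry.inr_apply]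
  refine Commute.smul_right ?_ _
  rw [commute_iff_eq, ← mul_assoc, hwv, mul_assoc, hω.map_inr_mul_ι, neg_mul, mul_neg, mul_assoc]

/-- The homomorphism `Cl(Q) ⊗ Cl(P) → Cl(c • Q ⊕ P)` inverse to `toTensor`. -/
noncomputable def ofTensor :
    CliffordAlgebra Q ⊗[R] CliffordAlgebra P →ₐ[R] CliffordAlgebra (Q'.prod P) :=
  Algebra.TensorProduct.lift (hω.twistedInl hQ) (map (.inr Q' P))
    (hω.commute_twistedInl_map_inr hQ)

@[simp]
theorem ofTensor_tmul (x : CliffordAlgebra Q) (y : CliffordAlgebra P) :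
    hω.ofTensor hQ (x ⊗ₜ y) = hω.twistedInl hQ x * map (.inr Q' P) y :=
  Algebra.TensorProduct.lift_tmul ..

theorem ofTensor_comp_toTensor :
    (hω.ofTensor hQ).comp (hω.toTensor hQ) = AlgHom.id R _ := by
  ext v
  · have h : (↑c⁻¹ : R) • (ι (Q'.prod P) (v, 0) * algebraMap R _ c) = ι (Q'.prod P) (v, 0) := by
      rw [← Algebra.commutes, ← Algebra.smul_def, smul_smul, c.inv_mul, one_smul]
    simpa [mul_assoc, hω.map_inr_mul_self] using h
  · simp

theorem toTensor_comp_ofTensor :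
    (hω.toTensor hQ).comp (hω.ofTensor hQ) = AlgHom.id R _ := by
  ext v
  · have h : (↑c⁻¹ : R) • ι Q v ⊗ₜ[R] algebraMap R (CliffordAlgebra P) c = ι Q v ⊗ₜ 1 := by
      rw [Algebra.algebraMap_eq_smul_one, TensorProduct.tmul_smul, smul_smul, c.inv_mul, one_smul]
    simpa [toTensor_map_inr, hω.mul_self] using h
  · simp

/-- `Cl(c • Q ⊕ P) ≅ Cl(Q) ⊗ Cl(P)` if `Cl(P)` has a volume element of unit square `c`. -/
noncomputable def prodEquivTensor :
    CliffordAlgebra (Q'.prod P) ≃ₐ[R] CliffordAlgebra Q ⊗[R] CliffordAlgebra P :=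
  AlgEquiv.ofAlgHom (hω.toTensor hQ) (hω.ofTensor hQ) (hω.toTensor_comp_ofTensor hQ)
    (hω.ofTensor_comp_toTensor hQ)

/-- `Cl(Q ⊕ P ⊕ P) ≅ Cl(Q) ⊗ (Cl(P') ⊗ Cl(P))` if `P = c • P'` and `Cl(P)`, `Cl(P')` have volume
elements of squares `c`, `c⁻¹`: the first `P` is scaled by `c⁻¹` when the second is split off. -/
noncomputable def prodProdEquivTensor (hω' : IsVolumeElement P' ω' ↑c⁻¹)
    (hP : ∀ x, P x = c * P' x) :
    CliffordAlgebra ((Q.prod P).prod P) ≃ₐ[R]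
      CliffordAlgebra Q ⊗[R] (CliffordAlgebra P' ⊗[R] CliffordAlgebra P) :=
  (hω.prodEquivTensor (Q := ((↑c⁻¹ : R) • Q).prod P') (by simp [hP, mul_add])).trans <|
    (Algebra.TensorProduct.congr (hω'.prodEquivTensor (by simp)) .refl).trans <|
      Algebra.TensorProduct.assoc ..

/-- `Cl(Q ⊕ P ⊕ P) ≅ Cl(Q ⊕ P' ⊕ P')` if `P = c • P'` and `Cl(P)`, `Cl(P')` have volume elements of
squares `c`, `c⁻¹`. -/
noncomputable def prodProdEquivProdProd (hω' : IsVolumeElement P' ω' ↑c⁻¹)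
    (hP : ∀ x, P x = c * P' x) :
    CliffordAlgebra ((Q.prod P).prod P) ≃ₐ[R] CliffordAlgebra ((Q.prod P').prod P') :=
  (hω.prodProdEquivTensor hω' hP).trans <|
    (Algebra.TensorProduct.congr .refl (Algebra.TensorProduct.comm ..)).trans <|
      (hω'.prodProdEquivTensor (by simpa using hω) (by simp [hP])).symm

end IsVolumeElement

theorem isVolumeElement_quaternionBasis_k (a b : R) :
    IsVolumeElement (CliffordAlgebraQuaternion.Q a b)
      (CliffordAlgebraQuaternion.quaternionBasis a b).k (-(a * b)) := by
  set q := CliffordAlgebraQuaternion.quaternionBasis a b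
  have ι_eq (x : R × R) : ι (CliffordAlgebraQuaternion.Q a b) x = x.1 • q.i + x.2 • q.j := by
    simp [q, ← map_smul, ← map_add]
  exact
    { mem_evenOdd_zero := ι_mul_ι_mem_evenOdd_zero _ (1, 0) (0, 1)
      mul_ι x := by simp [ι_eq, mul_add, add_mul, add_comm]
      mul_self := by simp [Algebra.algebraMap_eq_smul_one] }

end VolumeElement

section SplitQuaternion

variable (R : Type*) [CommRing R]

/-- Matrices satisfying the relations of the split quaternions, `i² = -1` and `j² = 1`. -/
def matrixQuaternionBasis :
    QuaternionAlgebra.Basis (Matrix (Fin 2) (Fin 2) R) (-1 : R) 0 1 where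
  i := !![0, 1; -1, 0]
  j := !![0, 1; 1, 0]
  k := !![1, 0; 0, -1]
  i_mul_i := by simp [Matrix.one_fin_two]
  j_mul_j := by simp [Matrix.one_fin_two]
  i_mul_j := by simp
  j_mul_i := by simp

variable {R} in
theorem matrixQuaternionBasis_lift (q : ℍ[R,-1,1]) :
    (matrixQuaternionBasis R).lift q =
      !![q.re + q.imK, q.imI + q.imJ; q.imJ - q.imI, q.re - q.imK] := by
  ext i j
  fin_cases i <;> fin_cases j <;>
    simp [QuaternionAlgebra.Basis.lift, matrixQuaternionBasis, Matrix.algebraMap_matrix_apply,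
      sub_eq_add_neg, add_comm]

/-- The split quaternions are the `2 × 2` matrices if `2` is invertible. -/
noncomputable def quaternionAlgebraEquivMatrix [Invertible (2 : R)] :
    ℍ[R,-1,1] ≃ₐ[R] Matrix (Fin 2) (Fin 2) R :=
  .ofBijective (matrixQuaternionBasis R).liftHom <| by
    have h : ⅟(2 : R) * 2 = 1 := invOf_mul_self 2
    refine Function.bijective_iff_has_inverse.mpr ⟨fun A => ⟨⅟2 * (A 0 0 + A 1 1),
      ⅟2 * (A 0 1 - A 1 0), ⅟2 * (A 0 1 + A 1 0), ⅟2 * (A 0 0 - A 1 1)⟩, fun q => ?_, fun A => ?_⟩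
    · ext <;> simp [matrixQuaternionBasis_lift]
      · linear_combination q.re * h
      · linear_combination q.imI * h
      · linear_combination q.imJ * h
      · linear_combination q.imK * h
    · ext i j
      fin_cases i <;> fin_cases j <;> simp [matrixQuaternionBasis_lift]
      · linear_combination A 0 0 * h
      · linear_combination A 0 1 * h
      · linear_combination A 1 0 * h
      · linear_combination A 1 1 * h

end SplitQuaternion

/-- The form with `r` coefficients `-1` followed by `s` coefficients `1`; this is `QSig` over an
arbitrary commutative ring. -/
def signatureForm (R : Type*) [CommRing R] (r s : ℕ) : QuadraticForm R (Fin (r + s) → R) :=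
  QuadraticMap.weightedSumSquares R fun i => if i.val < r then -1 else 1

theorem QSig_eq_signatureForm : QSig = signatureForm ℝ := by
  ext r s x
  simp [QSig, signatureForm]

namespace signatureForm

variable {R M : Type*} [CommRing R] [AddCommGroup M] [Module R M]

theorem apply (r s : ℕ) (x : Fin (r + s) → R) :
    signatureForm R r s x = -∑ i, x (Fin.castAdd s i) * x (Fin.castAdd s i)
      + ∑ i, x (Fin.natAdd r i) * x (Fin.natAdd r i) := by
  simp [signatureForm, Fin.sum_univ_add]

variable (R) in
/-- The orthogonal sum of the forms of signatures `(r, s)` and `(r', s')` has signature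
`(r + r', s + s')`. -/
noncomputable def prodIsometryEquiv (r s r' s' : ℕ) :
    ((signatureForm R r s).prod (signatureForm R r' s')).IsometryEquiv
      (signatureForm R (r + r') (s + s')) where
  toLinearEquiv :=
    (LinearEquiv.sumArrowLequivProdArrow _ _ R R).symm ≪≫ₗ
      LinearEquiv.funCongrLeft R R
        ((finSumFinEquiv.symm.trans (Equiv.sumCongr finSumFinEquiv.symm finSumFinEquiv.symm)).trans
          ((Equiv.sumSumSumComm _ _ _ _).trans (Equiv.sumCongr finSumFinEquiv finSumFinEquiv)))
  map_app' x := by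
    rw [QuadraticMap.prod_apply, apply, apply, apply, Fin.sum_univ_add, Fin.sum_univ_add, neg_add,
      add_add_add_comm]
    simp [LinearMap.funLeft, LinearEquiv.sumArrowLequivProdArrow, Equiv.sumArrowEquivProdArrow]

/-- Two consecutive signature summands of a quadratic form combine into one. -/
noncomputable def prodProdIsometryEquiv (Q : QuadraticForm R M) (r s r' s' : ℕ) :
    ((Q.prod (signatureForm R r s)).prod (signatureForm R r' s')).IsometryEquiv
      (Q.prod (signatureForm R (r + r') (s + s'))) :=
  QuadraticMap.IsometryEquiv.trans
    ⟨LinearEquiv.prodAssoc R _ _ _, fun _ => by simp [add_assoc]⟩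
    (.prod (.refl Q) (prodIsometryEquiv ..))

/-- The form of signature `(0, 0)` is a neutral orthogonal summand. -/
def prodZeroIsometryEquiv (Q : QuadraticForm R M) :
    (Q.prod (signatureForm R 0 0)).IsometryEquiv Q where
  toLinearEquiv :=
    let _ : Unique (Fin (0 + 0) → R) := inferInstanceAs (Unique (Fin 0 → R))
    LinearEquiv.prodUnique
  map_app' x := by simp [signatureForm]

variable (R)

/-- The form of signature `(2, 0)` is the plane `⟨-1, -1⟩`. -/
def twoZeroIsometryEquiv :
    (signatureForm R 2 0).IsometryEquiv (CliffordAlgebraQuaternion.Q (-1) (-1)) where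
  toLinearEquiv := LinearEquiv.finTwoArrow R R
  map_app' x := by simp [signatureForm]

/-- The form of signature `(0, 2)` is the plane `⟨1, 1⟩`. -/
def zeroTwoIsometryEquiv :
    (signatureForm R 0 2).IsometryEquiv (CliffordAlgebraQuaternion.Q 1 1) where
  toLinearEquiv := LinearEquiv.finTwoArrow R R
  map_app' x := by simp [signatureForm]

/-- The form of signature `(1, 1)` is the plane `⟨-1, 1⟩`. -/
def oneOneIsometryEquiv :
    (signatureForm R 1 1).IsometryEquiv (CliffordAlgebraQuaternion.Q (-1) 1) where
  toLinearEquiv := LinearEquiv.finTwoArrow R R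
  map_app' x := by simp [signatureForm]

variable {R} (Q : QuadraticForm R M)

/-- `Cl(Q ⊕ 4⟨-1⟩) ≅ Cl(Q ⊕ 4⟨1⟩)`. -/
noncomputable def prodFourEquiv :
    CliffordAlgebra (Q.prod (signatureForm R 4 0)) ≃ₐ[R]
      CliffordAlgebra (Q.prod (signatureForm R 0 4)) :=
  let i : ((Q.prod (signatureForm R 2 0)).prod (signatureForm R 2 0)).IsometryEquiv _ :=
    .prod (.prod (.refl Q) (twoZeroIsometryEquiv R)) (twoZeroIsometryEquiv R)
  let j : ((Q.prod (signatureForm R 0 2)).prod (signatureForm R 0 2)).IsometryEquiv _ :=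
    .prod (.prod (.refl Q) (zeroTwoIsometryEquiv R)) (zeroTwoIsometryEquiv R)
  (equivOfIsometry ((prodProdIsometryEquiv Q 2 0 2 0).symm.trans i)).trans <|
    (IsVolumeElement.prodProdEquivProdProd (c := -1)
      (by simpa using isVolumeElement_quaternionBasis_k (-1 : R) (-1))
      (by simpa using isVolumeElement_quaternionBasis_k (1 : R) 1)
      (fun x => by simp [add_comm])).trans <|
      equivOfIsometry (j.symm.trans (prodProdIsometryEquiv Q 0 2 0 2))

variable [Invertible (2 : R)]

/-- `Cl(Q ⊕ ⟨-1, 1⟩) ≅ M₂(Cl(Q))`. -/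
noncomputable def prodOneOneEquivMatrix :
    CliffordAlgebra (Q.prod (signatureForm R 1 1)) ≃ₐ[R]
      Matrix (Fin 2) (Fin 2) (CliffordAlgebra Q) :=
  (equivOfIsometry (.prod (.refl Q) (oneOneIsometryEquiv R))).trans <|
    (IsVolumeElement.prodEquivTensor (c := 1)
      (by simpa using isVolumeElement_quaternionBasis_k (-1 : R) 1) (by simp)).trans <|
      (Algebra.TensorProduct.congr .refl
        (CliffordAlgebraQuaternion.equiv.trans (quaternionAlgebraEquivMatrix R))).trans
        (matrixEquivTensor ..).symm

/-- `Cl(Q ⊕ n⟨-1, 1⟩)` is the algebra of `2ⁿ × 2ⁿ` matrices over `Cl(Q)`. -/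
noncomputable def prodEquivMatrix : (n : ℕ) →
    CliffordAlgebra (Q.prod (signatureForm R n n)) ≃ₐ[R]
      Matrix (Fin (2 ^ n)) (Fin (2 ^ n)) (CliffordAlgebra Q)
  | 0 => (equivOfIsometry (prodZeroIsometryEquiv Q)).trans <|
      .ofBijective (Matrix.scalarAlgHom (Fin 1) R) ⟨fun _ _ => Matrix.scalar_inj.mp, fun A =>
        ⟨A 0 0, by ext i j; fin_cases i; fin_cases j; simp⟩⟩
  | n + 1 => (equivOfIsometry (prodProdIsometryEquiv Q n n 1 1)).symm.trans <|
      (prodOneOneEquivMatrix _).trans <| (prodEquivMatrix n).mapMatrix.trans <|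
        (Matrix.compAlgEquiv _ _ _ R).trans <|
          Matrix.reindexAlgEquiv R _ <| finProdFinEquiv.trans <| finCongr (pow_succ' 2 n).symm

end signatureForm

open signatureForm

theorem cliffordAlgebra_signature_eight_periodicity_general {R M : Type*} [CommRing R]
    [Invertible (2 : R)] [AddCommGroup M] [Module R M] (Q : QuadraticForm R M) :
    Nonempty (CliffordAlgebra (Q.prod (signatureForm R 8 0)) ≃ₐ[R]
        CliffordAlgebra (Q.prod (signatureForm R 0 8))) ∧
      Nonempty (CliffordAlgebra (Q.prod (signatureForm R 8 0)) ≃ₐ[R]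
        Matrix (Fin 16) (Fin 16) (CliffordAlgebra Q)) ∧
      Nonempty (CliffordAlgebra (Q.prod (signatureForm R 0 8)) ≃ₐ[R]
        Matrix (Fin 16) (Fin 16) (CliffordAlgebra Q)) := by
  let split (r s r' s' : ℕ) := equivOfIsometry (prodProdIsometryEquiv Q r s r' s')
  let f := (split 4 0 4 0).symm.trans ((prodFourEquiv _).trans (split 4 0 0 4))
  let g := (split 0 4 0 4).symm.trans ((prodFourEquiv _).symm.trans (split 0 4 4 0))
  let h := prodEquivMatrix Q 4
  exact ⟨⟨f.trans g.symm⟩, ⟨f.trans h⟩, ⟨g.trans h⟩⟩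

/-- Periodicity of real Clifford algebras:
`Cl_{r+8,s} ≅ Cl_{r,s+8} ≅ M₁₆(Cl_{r,s})`. -/
theorem cliffordAlgebra_signature_eight_periodicity (r s : ℕ) :
    Nonempty (CliffordAlgebra (QSig (r + 8) s) ≃ₐ[ℝ] CliffordAlgebra (QSig r (s + 8))) ∧
      Nonempty (CliffordAlgebra (QSig (r + 8) s) ≃ₐ[ℝ]
        Matrix (Fin 16) (Fin 16) (CliffordAlgebra (QSig r s))) ∧
      Nonempty (CliffordAlgebra (QSig r (s + 8)) ≃ₐ[ℝ]
        Matrix (Fin 16) (Fin 16) (CliffordAlgebra (QSig r s))) := by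
  rw [QSig_eq_signatureForm]
  let split (r' s' : ℕ) := equivOfIsometry (prodIsometryEquiv ℝ r s r' s')
  obtain ⟨⟨f⟩, ⟨g⟩, ⟨h⟩⟩ :=
    cliffordAlgebra_signature_eight_periodicity_general (signatureForm ℝ r s)
  exact ⟨⟨(split 8 0).symm.trans (f.trans (split 0 8))⟩, ⟨(split 8 0).symm.trans g⟩,
    ⟨(split 0 8).symm.trans h⟩⟩
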